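/- arXiv:2601.10561 — 4 statements merged into one kernel-verified Lean document; each statement's English description precedes it below -/
import Mathlib

section
/- Let a, b be integers with (a,b) ≠ (0,0), let p be an odd prime that is a 0-Pisano-Legendre prime relative to (a,b), and let q ≥ 1 be an integer. Then the path graph P_{qπ_p(a,b)+1} on qπ_p(a,b)+1 vertices is an (a,b)-Fibonacci-Legendre cordial graph modulo p. -/
/-!
Label the path by the identity, `v_k ↦ k`. The edge between `k` and `k + 1` carries the sum
`F k + F (k + 1) = F (k + 2)`, so it gets label `1` exactly when `F (k + 2)` is a nonzero quadratic
residue mod `p` (`flcEdgeLabel_succ`). Hence `e(1) - e(0)` is the sum of a sign sequence `flcSign`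
over `q` full periods, shifted by two. The sequence has period `π = π_p(a,b)`, so the shift does not
matter, and the sum over one period is `|Λ₁| - |Λ₋₁| - |Λ₀| = 0`.

If no positive period existed, `π` would be the infimum of the empty set, `0`; every statement used
here remains true in that case, so positivity of `π` is never needed.
-/

noncomputable section

/-- The `(a,b)`-Fibonacci sequence: `F 0 = a`, `F 1 = b`, `F (n+2) = F n + F (n+1)`. -/
def fibAB (a b : ℤ) : ℕ → ℤ
  | 0 => a
  | 1 => b
  | n + 2 => fibAB a b n + fibAB a b (n + 1)

/-- The `(a,b)`-Pisano period of `p`: the least positive `k` with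
`F (n + k) ≡ F n (mod p)` for all `n`. -/
def pisanoAB (a b : ℤ) (p : ℕ) : ℕ :=
  sInf {k : ℕ | 0 < k ∧ ∀ n : ℕ, fibAB a b (n + k) ≡ fibAB a b n [ZMOD (p : ℤ)]}

/-- `Λ_j^p(a,b)`: the indices `ξ ∈ {0, …, π_p(a,b) - 1}` with `(F_ξ / p) = j`,
where (for odd prime `p`) the Legendre symbol is given by `jacobiSym`. -/
def LambdaSet (a b : ℤ) (p : ℕ) (j : ℤ) : Finset ℕ :=
  (Finset.range (pisanoAB a b p)).filter fun ξ => jacobiSym (fibAB a b ξ) p = j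

/-- `p` is a `k`-Pisano–Legendre prime relative to `(a,b)`. -/
def IsPLPrime (a b : ℤ) (p : ℕ) (k : ℤ) : Prop :=
  k = ((LambdaSet a b p 1).card : ℤ) - ((LambdaSet a b p (-1)).card : ℤ)
      - ((LambdaSet a b p 0).card : ℤ)

/-- `χ(a,b)`: the set of integers `k` for which some odd prime is a `k`-PL prime
relative to `(a,b)`. -/
def chiSet (a b : ℤ) : Set ℤ :=
  {k | ∃ p : ℕ, p.Prime ∧ Odd p ∧ IsPLPrime a b p k}

/-- The order of apparition `z(p)` of `p` in the classical Fibonacci sequence. -/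
def apparition (p : ℕ) : ℕ :=
  sInf {n : ℕ | 0 < n ∧ (p : ℤ) ∣ fibAB 0 1 n}

/-- The induced edge label `f_p*` on an unordered pair of vertex labels. -/
def flcEdgeLabel (a b : ℤ) (p : ℕ) : Sym2 ℕ → ℕ :=
  Sym2.lift ⟨fun x y =>
    if (p : ℤ) ∣ (fibAB a b x + fibAB a b y) then 0
    else (1 + jacobiSym (fibAB a b x + fibAB a b y) p).toNat / 2,
    fun x y => by dsimp only; rw [add_comm (fibAB a b x) (fibAB a b y)]⟩

/-- The number of edges of `G` receiving label `i` under the vertex labeling `f`. -/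
def flcCount {V : Type*} (G : SimpleGraph V) (a b : ℤ) (p : ℕ) (f : V → ℕ) (i : ℕ) : ℕ :=
  {e ∈ G.edgeSet | flcEdgeLabel a b p (e.map f) = i}.ncard

/-- `G` is an `(a,b)`-Fibonacci–Legendre cordial graph modulo `p`: there is a bijective
vertex labeling by `{0, …, |V| - 1}` with `|e(0) - e(1)| ≤ 1`. -/
def IsFLCGraph {V : Type*} [Fintype V] (G : SimpleGraph V) (a b : ℤ) (p : ℕ) : Prop :=
  ∃ f : V ≃ Fin (Fintype.card V),
    |(flcCount G a b p (fun v => ((f v : Fin (Fintype.card V)) : ℕ)) 0 : ℤ) -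
      (flcCount G a b p (fun v => ((f v : Fin (Fintype.card V)) : ℕ)) 1 : ℤ)| ≤ 1

/-- The path graph on `n` vertices. -/
def pathG (n : ℕ) : SimpleGraph (Fin n) :=
  SimpleGraph.fromRel fun i j => (i : ℕ) + 1 = (j : ℕ)

/-- The cycle graph on `n` vertices: the path graph plus the edge between the
first and last vertex. -/
def cycleG (n : ℕ) : SimpleGraph (Fin n) :=
  SimpleGraph.fromRel fun i j => (i : ℕ) + 1 = (j : ℕ) ∨ ((i : ℕ) = 0 ∧ (j : ℕ) = n - 1)

/-- The star graph on `n` vertices with central vertex `0`. -/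
def starG (n : ℕ) : SimpleGraph (Fin n) :=
  SimpleGraph.fromRel fun i _ => (i : ℕ) = 0

/-- The wheel graph on `n` vertices: hub `0` joined to every vertex of the cycle on
`1, …, n-1`. -/
def wheelG (n : ℕ) : SimpleGraph (Fin n) :=
  SimpleGraph.fromRel fun i j =>
    (i : ℕ) = 0 ∨ (i : ℕ) + 1 = (j : ℕ) ∨ ((i : ℕ) = 1 ∧ (j : ℕ) = n - 1)

/-- Lexicographic product of graphs. -/
def lexProd {α β : Type*} (G : SimpleGraph α) (H : SimpleGraph β) : SimpleGraph (α × β) :=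
  SimpleGraph.fromRel fun x y => G.Adj x.1 y.1 ∨ (x.1 = y.1 ∧ H.Adj x.2 y.2)

/-- Cartesian product of graphs. -/
def cartProd {α β : Type*} (G : SimpleGraph α) (H : SimpleGraph β) : SimpleGraph (α × β) :=
  SimpleGraph.fromRel fun x y => (x.1 = y.1 ∧ H.Adj x.2 y.2) ∨ (x.2 = y.2 ∧ G.Adj x.1 y.1)

/-- Tensor product of graphs. -/
def tensorProd {α β : Type*} (G : SimpleGraph α) (H : SimpleGraph β) : SimpleGraph (α × β) :=
  SimpleGraph.fromRel fun x y => G.Adj x.1 y.1 ∧ H.Adj x.2 y.2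

/-- Strong product of graphs: union of the cartesian and tensor products. -/
def strongProd {α β : Type*} (G : SimpleGraph α) (H : SimpleGraph β) : SimpleGraph (α × β) :=
  cartProd G H ⊔ tensorProd G H

/-- Join of two graphs: both graphs together with all edges between them. -/
def joinG {α β : Type*} (G : SimpleGraph α) (H : SimpleGraph β) : SimpleGraph (α ⊕ β) :=
  SimpleGraph.fromRel fun x y =>
    match x, y with
    | Sum.inl u, Sum.inl v => G.Adj u v
    | Sum.inr u, Sum.inr v => H.Adj u v
    | Sum.inl _, Sum.inr _ => True
    | Sum.inr _, Sum.inl _ => True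

/-- Corona `G ∘ H`: one copy of `G`, a copy of `H` for each vertex of `G`, and the
`u`-th vertex of `G` joined to every vertex of the `u`-th copy of `H`. -/
def coronaG {α β : Type*} (G : SimpleGraph α) (H : SimpleGraph β) :
    SimpleGraph (α ⊕ α × β) :=
  SimpleGraph.fromRel fun x y =>
    match x, y with
    | Sum.inl u, Sum.inl v => G.Adj u v
    | Sum.inr (u, s), Sum.inr (v, t) => u = v ∧ H.Adj s t
    | Sum.inl u, Sum.inr (v, _) => u = v
    | Sum.inr (u, _), Sum.inl v => u = v

/-- Disjoint union of a family of graphs on a common vertex type. -/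
def unionFam {ι V : Type*} (Gs : ι → SimpleGraph V) : SimpleGraph (ι × V) :=
  SimpleGraph.fromRel fun x y => x.1 = y.1 ∧ (Gs x.1).Adj x.2 y.2

/-- `1` if `F n` is a nonzero quadratic residue mod `p`, and `-1` otherwise. -/
def flcSign (a b : ℤ) (p : ℕ) (n : ℕ) : ℤ :=
  if jacobiSym (fibAB a b n) p = 1 then 1 else -1

theorem fibAB_pisano (a b : ℤ) (p n : ℕ) :
    fibAB a b (n + pisanoAB a b p) ≡ fibAB a b n [ZMOD (p : ℤ)] := by
  rcases Set.eq_empty_or_nonempty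
    {k : ℕ | 0 < k ∧ ∀ n : ℕ, fibAB a b (n + k) ≡ fibAB a b n [ZMOD (p : ℤ)]} with h | h
  · have : pisanoAB a b p = 0 := by rw [pisanoAB, h, Nat.sInf_empty]
    rw [this, add_zero]
  · exact (Nat.sInf_mem h).2 n

theorem flcSign_periodic (a b : ℤ) (p : ℕ) :
    Function.Periodic (flcSign a b p) (pisanoAB a b p) := by
  intro n
  have h := fibAB_pisano a b p n
  unfold flcSign
  rw [jacobiSym.mod_left, h, ← jacobiSym.mod_left]

theorem sum_range_shift_of_periodic (h : ℕ → ℤ) (c : ℕ) (hc : Function.Periodic h c) :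
    ∑ i ∈ Finset.range c, h (i + 1) = ∑ i ∈ Finset.range c, h i := by
  have h1 := Finset.sum_range_succ h c
  have h2 := Finset.sum_range_succ' h c
  have h3 : h c = h 0 := by simpa using hc 0
  linarith

theorem sum_range_mul_of_periodic (h : ℕ → ℤ) (c q : ℕ) (hc : Function.Periodic h c) :
    ∑ i ∈ Finset.range (q * c), h i = q * ∑ i ∈ Finset.range c, h i := by
  induction q with
  | zero => simp
  | succ q ih =>
    rw [Nat.succ_mul, Finset.sum_range_add, ih]
    have : ∀ i, h (q * c + i) = h i := fun i => by
      rw [add_comm]; exact hc.nat_mul q i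
    simp only [this]
    push_cast
    ring

/-- Over one period the signs add up to the Pisano–Legendre parameter of `p`. -/
theorem sum_flcSign (a b : ℤ) (p : ℕ) :
    ∑ i ∈ Finset.range (pisanoAB a b p), flcSign a b p i =
      ((LambdaSet a b p 1).card : ℤ) - ((LambdaSet a b p (-1)).card : ℤ)
      - ((LambdaSet a b p 0).card : ℤ) := by
  simp only [LambdaSet, Finset.card_filter]
  push_cast
  rw [← Finset.sum_sub_distrib, ← Finset.sum_sub_distrib]
  refine Finset.sum_congr rfl fun i _ => ?_
  unfold flcSign
  rcases jacobiSym.trichotomy (fibAB a b i) p with h | h | h <;> rw [h] <;> norm_num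

theorem flcEdgeLabel_succ (a b : ℤ) (p : ℕ) (hp : p.Prime) (k : ℕ) :
    flcEdgeLabel a b p s(k, k + 1) =
      if jacobiSym (fibAB a b (k + 2)) p = 1 then 1 else 0 := by
  have hfib : fibAB a b k + fibAB a b (k + 1) = fibAB a b (k + 2) := by rw [fibAB]
  have := Fact.mk hp
  have hdvd : (p : ℤ) ∣ fibAB a b (k + 2) ↔ jacobiSym (fibAB a b (k + 2)) p = 0 := by
    rw [← jacobiSym.legendreSym.to_jacobiSym, legendreSym.eq_zero_iff,
      ZMod.intCast_zmod_eq_zero_iff_dvd]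
  simp only [flcEdgeLabel, Sym2.lift_mk, hfib, hdvd]
  rcases jacobiSym.trichotomy (fibAB a b (k + 2)) p with h | h | h <;> rw [h] <;> decide

/-- Edges of the path on `N + 1` vertices correspond to their left endpoints. -/
theorem flcCount_path (a b : ℤ) (p N i : ℕ) :
    flcCount (pathG (N + 1)) a b p (fun v => (v : ℕ)) i =
      ((Finset.range N).filter fun k => flcEdgeLabel a b p s(k, k + 1) = i).card := by
  unfold flcCount
  rw [← Set.ncard_coe_finset]
  symm
  refine Set.ncard_congr
    (fun k hk => s((⟨k, ?_⟩ : Fin (N + 1)), (⟨k + 1, ?_⟩ : Fin (N + 1)))) ?_ ?_ ?_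
  · simp at hk; omega
  · simp at hk; omega
  · intro k hk
    simp at hk
    simp [pathG, hk.2]
  · intro k l hk hl h
    simp at h
    omega
  · intro e
    induction e using Sym2.ind with
    | _ x y =>
    rintro ⟨he, hl⟩
    obtain ⟨x, hx⟩ := x
    obtain ⟨y, hy⟩ := y
    simp only [Sym2.map_mk] at hl
    simp [pathG] at he
    rcases he.2 with h | h
    · subst h
      exact ⟨x, by simp [hl]; omega, rfl⟩
    · subst h
      rw [Sym2.eq_swap] at hl
      exact ⟨y, by simp [hl]; omega, Sym2.eq_swap⟩

/-- For `(a,b) ≠ (0,0)`, an odd prime `p` that is a `0`-PL prime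
relative to `(a,b)`, and `q ≥ 1`, the path graph on `q·π_p(a,b) + 1` vertices is an
`(a,b)`-FLC graph modulo `p`. -/
theorem path_isFLCGraph (a b : ℤ) (hab : (a, b) ≠ (0, 0)) (p : ℕ) (hp : p.Prime)
    (hodd : Odd p) (hPL : IsPLPrime a b p 0) (q : ℕ) (hq : 1 ≤ q) :
    IsFLCGraph (pathG (q * pisanoAB a b p + 1)) a b p := by
  refine ⟨finCongr (Fintype.card_fin _).symm, ?_⟩
  simp only [finCongr_apply, Fin.val_cast]
  rw [flcCount_path, flcCount_path]
  set N := q * pisanoAB a b p with hN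
  have hper : Function.Periodic (flcSign a b p) N := (flcSign_periodic a b p).nat_mul q
  have hsum : ∑ k ∈ Finset.range N, flcSign a b p (k + 2) = 0 := by
    rw [sum_range_shift_of_periodic (fun k => flcSign a b p (k + 1)) N
        (fun k => by have := hper (k + 1); rwa [add_right_comm] at this),
      sum_range_shift_of_periodic _ N hper, hN,
      sum_range_mul_of_periodic _ _ q (flcSign_periodic a b p), sum_flcSign, ← hPL, mul_zero]
  have hdiff : ((((Finset.range N).filter
        fun k => flcEdgeLabel a b p s(k, k + 1) = 0).card : ℤ) -
      ((Finset.range N).filter fun k => flcEdgeLabel a b p s(k, k + 1) = 1).card) =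
      -∑ k ∈ Finset.range N, flcSign a b p (k + 2) := by
    simp only [Finset.card_filter, flcEdgeLabel_succ a b p hp]
    push_cast
    rw [← Finset.sum_sub_distrib, ← Finset.sum_neg_distrib]
    refine Finset.sum_congr rfl fun k _ => ?_
    unfold flcSign
    split_ifs <;> simp_all
  rw [hdiff, hsum]
  norm_num
end
end

section
/- Let a, b be integers with (a,b) ≠ (0,0), let p be an odd prime that is a 0-Pisano-Legendre prime relative to (a,b), let q ≥ 1 be an integer, and let G be a connected graph. Then the tensor product graph C_{qπ_p(a,b)} × G is an (a,b)-Fibonacci-Legendre cordial graph modulo p. -/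
/-! Write `π` for the Pisano period and `N = q * π`. The vertex `(i, v)` of `C_N × G` is labeled
`i + N * e v`, where `e` enumerates `V`; since `π ∣ N`, the Fibonacci number at this label is
congruent to `F i`. An edge from `(i, u)` to `(i + 1, v)`, the first coordinate being read
modulo `N`, then has label decided by `F i + F (i + 1) = F (i + 2)` (`fib_add_cycSucc`), so it
depends only on `i`.

When `N ≥ 3` the edges of `C_N × G` correspond bijectively to pairs `(i, d)` with `i` a vertex of
the cycle and `d` a dart of `G` (`dartEdge_injective`, `range_dartEdge`). Thus the number of edges
with a given label is the number of darts of `G` times the number of `i < N` with that label. The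
`0`-PL hypothesis says that the labels `0` and `1` are equally frequent on one period, hence also
on the shifted indices `2, …, N + 1` (`sum_plSign_shift`), so `e(0) = e(1)`.

If `π = 0` the graph has no vertices. If `π` is `1` or `2`, the recurrence forces `F` to vanish
modulo `p`, which contradicts the `0`-PL hypothesis (`three_le_pisanoAB`). -/

noncomputable section

/-! ### The sign of a Fibonacci number modulo `p` -/

/-- The contribution of the index `n` to the `0`-PL count: `1` if `F n` is a nonzero square
modulo `p`, and `-1` otherwise. -/
def plSign (a b : ℤ) (p n : ℕ) : ℤ :=
  if jacobiSym (fibAB a b n) p = 1 then 1 else -1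

theorem fibAB_add_pisanoAB (a b : ℤ) (p : ℕ) (n : ℕ) :
    fibAB a b (n + pisanoAB a b p) ≡ fibAB a b n [ZMOD (p : ℤ)] := by
  rcases Set.eq_empty_or_nonempty
    {k : ℕ | 0 < k ∧ ∀ n : ℕ, fibAB a b (n + k) ≡ fibAB a b n [ZMOD (p : ℤ)]} with h | h
  · -- with no period at all, the infimum defining `pisanoAB` is `0`
    simp [pisanoAB, h, Int.ModEq.refl]
  · exact (Nat.sInf_mem h).2 n

theorem fibAB_add_mul_pisanoAB (a b : ℤ) (p n m : ℕ) :
    fibAB a b (n + m * pisanoAB a b p) ≡ fibAB a b n [ZMOD (p : ℤ)] := by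
  induction m with
  | zero => simp [Int.ModEq.refl]
  | succ m ih =>
    rw [Nat.succ_mul, ← add_assoc]
    exact (fibAB_add_pisanoAB a b p _).trans ih

theorem plSign_congr {a b : ℤ} {p m n : ℕ}
    (h : fibAB a b m ≡ fibAB a b n [ZMOD (p : ℤ)]) : plSign a b p m = plSign a b p n := by
  unfold plSign
  rw [jacobiSym.mod_left' h]

theorem sum_plSign_eq_zero {a b : ℤ} {p : ℕ} (hPL : IsPLPrime a b p 0) :
    ∑ n ∈ Finset.range (pisanoAB a b p), plSign a b p n = 0 := by
  unfold IsPLPrime LambdaSet at hPL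
  rw [hPL]
  simp only [Finset.card_filter, Nat.cast_sum, ← Finset.sum_sub_distrib]
  refine Finset.sum_congr rfl fun n _ => ?_
  unfold plSign
  rcases jacobiSym.trichotomy (fibAB a b n) p with h | h | h <;> simp [h]

/-- The sum of a periodic function over a period does not depend on the starting point. -/
theorem sum_range_shift (h : ℕ → ℤ) (c : ℕ) (hc : ∀ n, h (n + c) = h n) (m : ℕ) :
    ∑ n ∈ Finset.range c, h (n + m) = ∑ n ∈ Finset.range c, h n := by
  induction m with
  | zero => simp
  | succ m ih =>
    have h1 := Finset.sum_range_succ (fun n => h (n + m)) c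
    have h2 := Finset.sum_range_succ' (fun n => h (n + m)) c
    have h3 : h (c + m) = h (0 + m) := by rw [add_comm, hc, zero_add]
    have h4 : ∑ n ∈ Finset.range c, h (n + 1 + m) = ∑ n ∈ Finset.range c, h (n + (m + 1)) :=
      Finset.sum_congr rfl fun n _ => by congr 1; ring
    linarith

theorem sum_plSign_shift {a b : ℤ} {p : ℕ} (hPL : IsPLPrime a b p 0) (q m : ℕ) :
    ∑ n ∈ Finset.range (q * pisanoAB a b p), plSign a b p (n + m) = 0 := by
  have hper : ∀ n, plSign a b p (n + pisanoAB a b p) = plSign a b p n :=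
    fun n => plSign_congr (fibAB_add_pisanoAB a b p n)
  induction q with
  | zero => simp
  | succ q ih =>
    rw [Nat.succ_mul, Finset.sum_range_add, ih, zero_add, ← sum_plSign_eq_zero hPL,
      ← sum_range_shift _ _ hper (q * pisanoAB a b p + m)]
    exact Finset.sum_congr rfl fun n _ => by congr 1; ring

theorem three_le_pisanoAB {a b : ℤ} {p : ℕ} (hp : p.Prime) (hPL : IsPLPrime a b p 0)
    (h0 : pisanoAB a b p ≠ 0) : 3 ≤ pisanoAB a b p := by
  by_contra hlt
  have hper := fibAB_add_pisanoAB a b p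
  have hrec : ∀ n, fibAB a b (n + 2) = fibAB a b n + fibAB a b (n + 1) := fun n => by
    rw [fibAB]
  have hzero : ∀ n, (p : ℤ) ∣ fibAB a b n := by
    intro n
    obtain h1 | h2 : pisanoAB a b p = 1 ∨ pisanoAB a b p = 2 := by omega
    · have := (hper (n + 1)).symm.dvd
      rw [h1, add_assoc, hrec] at this
      simpa using this
    · have hs : ∀ n, (p : ℤ) ∣ fibAB a b (n + 1) := fun n => by
        have := (hper n).symm.dvd
        rw [h2, hrec] at this
        simpa using this
      have := (hper n).symm.dvd
      rw [h2] at this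
      exact (dvd_sub_right (hs (n + 1))).mp this
  have hsum := sum_plSign_eq_zero hPL
  have hneg : ∀ n, plSign a b p n = -1 := fun n => by
    unfold plSign
    rw [jacobiSym.mod_left, Int.emod_eq_zero_of_dvd (hzero n), jacobiSym.zero_left hp.one_lt]
    simp
  simp [hneg] at hsum
  exact h0 hsum

/-! ### Edge labels -/

theorem flcEdgeLabel_mk {a b : ℤ} {p : ℕ} (hp : p.Prime) {x y n : ℕ}
    (h : fibAB a b x + fibAB a b y ≡ fibAB a b n [ZMOD (p : ℤ)]) :
    flcEdgeLabel a b p s(x, y) = if plSign a b p n = 1 then 1 else 0 := by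
  have hJ := jacobiSym.mod_left' h
  simp only [flcEdgeLabel, Sym2.lift_mk, plSign, hJ]
  split_ifs with hd h1 h1 h1 h1 <;> try simp_all
  · rw [jacobiSym.mod_left, Int.emod_eq_zero_of_dvd hd, jacobiSym.zero_left hp.one_lt] at hJ
    simp at hJ
  · rcases jacobiSym.trichotomy (fibAB a b n) p with h | h | h <;> simp_all

theorem ncard_label_eq {a b : ℤ} {p N : ℕ}
    (hsum : ∑ n ∈ Finset.range N, plSign a b p (n + 2) = 0) :
    {k : Fin N | (if plSign a b p (k + 2) = 1 then 1 else 0) = 0}.ncard =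
      {k : Fin N | (if plSign a b p (k + 2) = 1 then 1 else 0) = 1}.ncard := by
  rw [Set.ncard_eq_toFinset_card', Set.ncard_eq_toFinset_card']
  simp only [Set.toFinset_ofPred, Finset.card_filter]
  zify
  rw [← sub_eq_zero, ← Finset.sum_sub_distrib, ← neg_eq_zero, ← Finset.sum_neg_distrib]
  rw [Finset.sum_range] at hsum
  refine Eq.trans ?_ hsum
  refine Finset.sum_congr rfl fun k _ => ?_
  by_cases h : jacobiSym (fibAB a b (k + 2)) p = 1 <;> simp [plSign, h]

/-! ### Edges of the tensor product with a cycle -/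

/-- The cyclic successor `k ↦ k + 1 mod N` on `Fin N`. -/
def cycSucc {N : ℕ} (k : Fin N) : Fin N :=
  ⟨if (k : ℕ) + 1 = N then 0 else k + 1, by split_ifs <;> omega⟩

theorem cycSucc_val {N : ℕ} (k : Fin N) :
    (cycSucc k : ℕ) = if (k : ℕ) + 1 = N then 0 else (k : ℕ) + 1 := rfl

theorem cycleG_adj {N : ℕ} (hN : 3 ≤ N) (i j : Fin N) :
    (cycleG N).Adj i j ↔ j = cycSucc i ∨ i = cycSucc j := by
  simp only [cycleG, SimpleGraph.fromRel_adj, ne_eq, Fin.ext_iff, cycSucc_val]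
  have := i.isLt
  have := j.isLt
  split_ifs <;> omega

/-- The edge of the tensor product going from `k` to its successor along the cycle, over a dart
of `G`. -/
def dartEdge {N : ℕ} {V : Type*} (G : SimpleGraph V) (x : Fin N × G.Dart) : Sym2 (Fin N × V) :=
  s((x.1, x.2.fst), (cycSucc x.1, x.2.snd))

theorem dartEdge_injective {N : ℕ} (hN : 3 ≤ N) {V : Type*} (G : SimpleGraph V) :
    Function.Injective (dartEdge (N := N) G) := by
  rintro ⟨i, d⟩ ⟨j, c⟩ h
  simp only [dartEdge, Sym2.eq_iff, Prod.mk.injEq] at h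
  rcases h with ⟨⟨rfl, h1⟩, -, h2⟩ | ⟨⟨h1, -⟩, h2, -⟩
  · rw [SimpleGraph.Dart.ext d c (Prod.ext h1 h2)]
  · -- two successor steps cannot return to the start on a cycle of length at least `3`
    exfalso
    simp only [Fin.ext_iff, cycSucc_val] at h1 h2
    have := i.isLt
    have := j.isLt
    split_ifs at h1 h2 <;> omega

theorem range_dartEdge {N : ℕ} (hN : 3 ≤ N) {V : Type*} (G : SimpleGraph V) :
    Set.range (dartEdge (N := N) G) = (tensorProd (cycleG N) G).edgeSet := by
  have hadj : ∀ x y : Fin N × V, (tensorProd (cycleG N) G).Adj x y ↔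
      (cycleG N).Adj x.1 y.1 ∧ G.Adj x.2 y.2 := fun x y => by
    simp only [tensorProd, SimpleGraph.fromRel_adj]
    refine ⟨fun h => h.2.elim id fun h => ⟨h.1.symm, h.2.symm⟩, fun h => ⟨?_, Or.inl h⟩⟩
    rintro rfl
    exact h.2.ne rfl
  ext e
  induction e with
  | h x y =>
    obtain ⟨i, u⟩ := x
    obtain ⟨j, v⟩ := y
    rw [SimpleGraph.mem_edgeSet, hadj, cycleG_adj hN]
    constructor
    · rintro ⟨⟨k, d⟩, h⟩
      simp only [dartEdge, Sym2.eq_iff, Prod.mk.injEq] at h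
      rcases h with ⟨⟨rfl, rfl⟩, rfl, rfl⟩ | ⟨⟨rfl, rfl⟩, rfl, rfl⟩
      · exact ⟨Or.inl rfl, d.adj⟩
      · exact ⟨Or.inr rfl, d.adj.symm⟩
    · rintro ⟨rfl | rfl, h⟩
      · exact ⟨(i, ⟨(u, v), h⟩), rfl⟩
      · exact ⟨(j, ⟨(v, u), h.symm⟩), Sym2.eq_swap⟩

/-- The Fibonacci recurrence read along the cycle, including the closing edge. -/
theorem fib_add_cycSucc (a b : ℤ) (p q : ℕ) (k : Fin (q * pisanoAB a b p)) :
    fibAB a b k + fibAB a b (cycSucc k : Fin _) ≡ fibAB a b (k + 2) [ZMOD (p : ℤ)] := by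
  have hs : fibAB a b (cycSucc k : Fin _) ≡ fibAB a b (k + 1) [ZMOD (p : ℤ)] := by
    rw [cycSucc_val]
    split_ifs with h
    · rw [h]
      simpa using (fibAB_add_mul_pisanoAB a b p 0 q).symm
    · rfl
  rw [show fibAB a b (k + 2) = fibAB a b k + fibAB a b (k + 1) by rw [fibAB]]
  exact hs.add_left _

/-- If the label of `(i, v)` has the same Fibonacci number modulo `p` as `i`, then each edge label
is attained once for every dart of `G` and every `k` whose `F (k + 2)` determines that label. -/
theorem flcCount_tensorProd {a b : ℤ} {p q : ℕ} (hp : p.Prime)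
    (hN : 3 ≤ q * pisanoAB a b p) {V : Type*} (G : SimpleGraph V)
    (f : Fin (q * pisanoAB a b p) × V → ℕ)
    (hf : ∀ x, fibAB a b (f x) ≡ fibAB a b x.1 [ZMOD (p : ℤ)]) (i : ℕ) :
    flcCount (tensorProd (cycleG (q * pisanoAB a b p)) G) a b p f i =
      {k : Fin (q * pisanoAB a b p) | (if plSign a b p (k + 2) = 1 then 1 else 0) = i}.ncard *
        (Set.univ : Set G.Dart).ncard := by
  have hlab : ∀ x : Fin (q * pisanoAB a b p) × G.Dart,
      flcEdgeLabel a b p ((dartEdge G x).map f) =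
        if plSign a b p ((x.1 : ℕ) + 2) = 1 then 1 else 0 := fun x => by
    rw [dartEdge, Sym2.map_mk]
    exact flcEdgeLabel_mk hp (((hf _).add (hf _)).trans (fib_add_cycSucc a b p q x.1))
  rw [flcCount, ← Set.ncard_prod, ← Set.ncard_image_of_injective _ (dartEdge_injective hN G)]
  congr 1
  ext e
  rw [← range_dartEdge hN]
  constructor
  · rintro ⟨⟨x, rfl⟩, h⟩
    exact ⟨x, ⟨(hlab x).symm.trans h, trivial⟩, rfl⟩
  · rintro ⟨x, ⟨h, -⟩, rfl⟩
    exact ⟨⟨x, rfl⟩, (hlab x).trans h⟩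

/-- For `(a,b) ≠ (0,0)`, an odd prime `p` that is a `0`-PL prime
relative to `(a,b)`, `q ≥ 1`, and a connected graph `G`, the tensor product
`C_{q·π_p(a,b)} × G` is an `(a,b)`-FLC graph modulo `p`. -/
theorem tensorProd_cycle_isFLCGraph (a b : ℤ) (hab : (a, b) ≠ (0, 0)) (p : ℕ)
    (hp : p.Prime) (hodd : Odd p) (hPL : IsPLPrime a b p 0) (q : ℕ) (hq : 1 ≤ q)
    {V : Type} [Fintype V] (G : SimpleGraph V) (hG : G.Connected) :
    IsFLCGraph (tensorProd (cycleG (q * pisanoAB a b p)) G) a b p := by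
  classical
  set N := q * pisanoAB a b p with hNdef
  have hcard : Fintype.card V * N = Fintype.card (Fin N × V) := by
    simp [mul_comm]
  let f : Fin N × V ≃ Fin (Fintype.card (Fin N × V)) :=
    (Equiv.prodComm _ _).trans
      (((Fintype.equivFin V).prodCongr (Equiv.refl _)).trans
        (finProdFinEquiv.trans (finCongr hcard)))
  refine ⟨f, ?_⟩
  by_cases h0 : pisanoAB a b p = 0
  · have : IsEmpty (Fin N) := by
      rw [hNdef, h0, mul_zero]
      infer_instance
    have : IsEmpty (Sym2 (Fin N × V)) := by
      refine ⟨fun e => ?_⟩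
      induction e with
      | h x y => exact isEmptyElim x.1
    simp [flcCount, Set.eq_empty_of_isEmpty]
  · have hN : 3 ≤ N := (three_le_pisanoAB hp hPL h0).trans (Nat.le_mul_of_pos_left _ hq)
    have hf : ∀ x, fibAB a b (f x) ≡ fibAB a b x.1 [ZMOD (p : ℤ)] := by
      intro x
      have hval : ((f x : Fin _) : ℕ) =
          (x.1 : ℕ) + ((Fintype.equivFin V x.2 : Fin _) : ℕ) * q * pisanoAB a b p := by
        simp [f, finProdFinEquiv, hNdef]
        ring
      rw [hval]
      exact fibAB_add_mul_pisanoAB a b p _ _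
    rw [flcCount_tensorProd hp hN G _ hf, flcCount_tensorProd hp hN G _ hf,
      ncard_label_eq (sum_plSign_shift hPL q 2)]
    simp
end
end

section
/- Let a, b be integers with (a,b) ≠ (0,0) and let p be an odd prime. If p is a k-Pisano-Legendre prime relative to (a,b), then k and π_p(a,b) have the same parity. In particular, every k ∈ χ(0,1) is even. -/
/-!
The sets `Λ₁`, `Λ₋₁`, `Λ₀` partition `{0, …, π - 1}`, so `k = |Λ₁| - |Λ₋₁| - |Λ₀|` is congruent
modulo `2` to their total size `π`. For the classical sequence `π` is even: Cassini's identity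
`F_{n+1}² - F_n F_{n+1} - F_n² = (-1)^n` at `n = π` reads `1 ≡ (-1)^π (mod p)`, and `p > 2`.
-/

noncomputable section

/-- The three sets `Λ_j` partition `{0, …, π - 1}`, as the Jacobi symbol
only takes the values `1`, `-1`, `0`. -/
theorem card_LambdaSet_add (a b : ℤ) (p : ℕ) :
    (LambdaSet a b p 1).card + (LambdaSet a b p (-1)).card + (LambdaSet a b p 0).card
      = pisanoAB a b p := by
  have hcover : ∀ n : ℕ,
      ((Finset.range n).filter fun ξ => jacobiSym (fibAB a b ξ) p = 1).card
        + ((Finset.range n).filter fun ξ => jacobiSym (fibAB a b ξ) p = -1).card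
        + ((Finset.range n).filter fun ξ => jacobiSym (fibAB a b ξ) p = 0).card = n := by
    intro n
    simp only [Finset.card_filter, ← Finset.sum_add_distrib]
    calc _ = ∑ _i ∈ Finset.range n, 1 := by
          refine Finset.sum_congr rfl fun i _ => ?_
          rcases jacobiSym.trichotomy (fibAB a b i) p with h | h | h <;> simp [h]
      _ = n := by simp
  exact hcover _

/-- `k = |Λ₁| - |Λ₋₁| - |Λ₀|` differs from `π = |Λ₁| + |Λ₋₁| + |Λ₀|` by an even number. -/
theorem even_iff_even_pisanoAB {a b : ℤ} {p : ℕ} {k : ℤ} (hPL : IsPLPrime a b p k) :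
    Even k ↔ Even (pisanoAB a b p) := by
  have h := card_LambdaSet_add a b p
  unfold IsPLPrime at hPL
  rw [Int.even_iff, Nat.even_iff]
  omega

/-- Cassini's identity, in terms of two consecutive Fibonacci numbers. -/
theorem fibAB_cassini (n : ℕ) :
    fibAB 0 1 (n + 1) ^ 2 - fibAB 0 1 n * fibAB 0 1 (n + 1) - fibAB 0 1 n ^ 2 = (-1) ^ n := by
  induction n with
  | zero => simp [fibAB]
  | succ n ih =>
    have h : fibAB 0 1 (n + 1 + 1) = fibAB 0 1 n + fibAB 0 1 (n + 1) := rfl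
    rw [h, pow_succ (-1 : ℤ) n, ← ih]
    ring

/-- If `m` is the classical Pisano period of an odd prime `p`, then `F_m ≡ 0` and
`F_{m+1} ≡ 1`, so Cassini's identity gives `(-1)^m ≡ 1 (mod p)`. -/
theorem even_pisanoAB_zero_one {p : ℕ} (hp : p.Prime) (hodd : Odd p) :
    Even (pisanoAB 0 1 p) := by
  -- Existence of a period is not needed: `sInf ∅ = 0` is even.
  rcases Set.eq_empty_or_nonempty
    {k : ℕ | 0 < k ∧ ∀ n : ℕ, fibAB 0 1 (n + k) ≡ fibAB 0 1 n [ZMOD (p : ℤ)]} with hS | hS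
  · simp [pisanoAB, hS]
  · obtain ⟨-, hper⟩ : 0 < pisanoAB 0 1 p ∧
        ∀ n : ℕ, fibAB 0 1 (n + pisanoAB 0 1 p) ≡ fibAB 0 1 n [ZMOD (p : ℤ)] := Nat.sInf_mem hS
    generalize pisanoAB 0 1 p = m at hper
    have h0 : fibAB 0 1 m ≡ 0 [ZMOD (p : ℤ)] := by simpa [fibAB] using hper 0
    have h1 : fibAB 0 1 (m + 1) ≡ 1 [ZMOD (p : ℤ)] := by
      simpa [fibAB, add_comm] using hper 1
    have hcas : (-1 : ℤ) ^ m ≡ 1 [ZMOD (p : ℤ)] := by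
      have h := ((h1.pow 2).sub (h0.mul h1)).sub (h0.pow 2)
      rw [fibAB_cassini] at h
      simpa using h
    by_contra hm
    rw [(Nat.not_even_iff_odd.mp hm).neg_one_pow] at hcas
    have hdvd : (p : ℤ) ∣ ((2 : ℕ) : ℤ) := by simpa using hcas.dvd
    have hle := Nat.le_of_dvd two_pos (Int.natCast_dvd_natCast.mp hdvd)
    have h2 := hp.two_le
    obtain ⟨r, hr⟩ := hodd
    omega

/-- If `p` is a `k`-PL prime relative to `(a,b)`, then `k` and
`π_p(a,b)` have the same parity; in particular every `k ∈ χ(0,1)` is even. -/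
theorem isPLPrime_parity (a b : ℤ) (hab : (a, b) ≠ (0, 0)) (p : ℕ) (hp : p.Prime)
    (hodd : Odd p) (k : ℤ) (hPL : IsPLPrime a b p k) :
    (Even k ↔ Even (pisanoAB a b p)) ∧ ∀ k' ∈ chiSet 0 1, Even k' := by
  refine ⟨even_iff_even_pisanoAB hPL, ?_⟩
  rintro k' ⟨q, hq, hqodd, hk'⟩
  exact (even_iff_even_pisanoAB hk').mpr (even_pisanoAB_zero_one hq hqodd)
end
end

section
/- Let p be an odd prime and let z(p) be the order of apparition of p for the classical Fibonacci sequence. Then |Λ₀^p(0,1)| = π_p(0,1)/z(p). In fact, |Λ₀^p(0,1)| ∈ {1,2,4}, and moreover |Λ₀^p(0,1)| = 4 if and only if z(p) is odd. -/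
/-!
Write `f n` for the image of the `n`-th Fibonacci number in `ZMod p`, `z = z(p)` and
`u = f (z + 1)`. The addition formula gives `f (n + z) = u * f n`, hence
`f (n + k * z) = u ^ k * f n`. By the gcd property of Fibonacci numbers, `f n = 0` iff `z ∣ n`.
A period is an index `k` with `f k = 0` and `f (k + 1) = 1`, i.e. `k = z * m` with `u ^ m = 1`, so
the Pisano period is `z * orderOf u` and exactly `orderOf u` indices in one period are zeros.

Cassini's identity gives `u ^ 2 = (-1) ^ z`. If `z` is odd then `u ^ 2 = -1 ≠ 1`, so `u` has order
`4`; if `z` is even then `u ^ 2 = 1`, so `u` has order `1` or `2`.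
-/

noncomputable section

theorem fibAB_zero_one (n : ℕ) : fibAB 0 1 n = (Nat.fib n : ℤ) := by
  induction n using Nat.twoStepInduction with
  | zero => simp [fibAB]
  | one => simp [fibAB]
  | more n h1 h2 => rw [fibAB, h1, h2, Nat.fib_add_two]; push_cast; ring

/-- The invertible step `(a, b) ↦ (b, a + b)` of the Fibonacci recursion. -/
def fibStep (R : Type*) [CommRing R] : Equiv.Perm (R × R) where
  toFun x := (x.2, x.1 + x.2)
  invFun x := (x.2 - x.1, x.1)
  left_inv x := by ext <;> simp
  right_inv x := by ext <;> simp

theorem fibStep_pow (R : Type*) [CommRing R] (n : ℕ) :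
    ((fibStep R) ^ n) (0, 1) = ((Nat.fib n : R), (Nat.fib (n + 1) : R)) := by
  induction n with
  | zero => simp
  | succ n ih =>
    rw [pow_succ', Equiv.Perm.mul_apply, ih, Nat.fib_add_two]
    simp [fibStep]

/-- Some positive-index Fibonacci number is divisible by `p`, because `fibStep` has finite order
on the finite set of pairs of residues. -/
theorem exists_dvd_fib (p : ℕ) [NeZero p] : ∃ n, 0 < n ∧ p ∣ Nat.fib n := by
  refine ⟨orderOf (fibStep (ZMod p)), orderOf_pos _, ?_⟩
  have h := fibStep_pow (ZMod p) (orderOf (fibStep (ZMod p)))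
  rw [pow_orderOf_eq_one] at h
  have h1 := congrArg Prod.fst h
  simpa [ZMod.natCast_eq_zero_iff] using h1.symm

theorem fib_cassini (R : Type*) [CommRing R] (n : ℕ) :
    (Nat.fib (n + 1) : R) ^ 2 - Nat.fib n * Nat.fib (n + 1) - (Nat.fib n : R) ^ 2 = (-1) ^ n := by
  induction n with
  | zero => simp
  | succ n ih =>
    rw [pow_succ (-1 : R), ← ih, Nat.fib_add_two]
    push_cast
    ring

theorem apparition_spec (p : ℕ) [NeZero p] :
    0 < apparition p ∧ p ∣ Nat.fib (apparition p) := by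
  have h : (({n : ℕ | 0 < n ∧ (p : ℤ) ∣ fibAB 0 1 n}) : Set ℕ).Nonempty := by
    obtain ⟨n, hn, hd⟩ := exists_dvd_fib p
    exact ⟨n, hn, by rw [fibAB_zero_one]; exact_mod_cast hd⟩
  have := Nat.sInf_mem h
  rw [Set.mem_ofPred_eq, fibAB_zero_one] at this
  exact ⟨this.1, by exact_mod_cast this.2⟩

theorem apparition_le (p n : ℕ) (hn : 0 < n) (h : p ∣ Nat.fib n) : apparition p ≤ n :=
  Nat.sInf_le ⟨hn, by rw [fibAB_zero_one]; exact_mod_cast h⟩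

theorem dvd_fib_iff (p : ℕ) [NeZero p] (n : ℕ) : p ∣ Nat.fib n ↔ apparition p ∣ n := by
  obtain ⟨hz, hd⟩ := apparition_spec p
  constructor
  · intro h
    have h1 : p ∣ Nat.fib (Nat.gcd n (apparition p)) := by
      rw [Nat.fib_gcd]
      exact Nat.dvd_gcd h hd
    have h2 := apparition_le p _ (Nat.gcd_pos_of_pos_right n hz) h1
    have h3 : Nat.gcd n (apparition p) = apparition p :=
      le_antisymm (Nat.gcd_le_right n hz) h2
    rw [← h3]
    exact Nat.gcd_dvd_left _ _
  · intro h
    exact hd.trans (Nat.fib_dvd _ _ h)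

/-- The multiplier of the Fibonacci sequence modulo `p`: shifting the index by `z(p)` multiplies
the sequence by this residue. -/
def fibMultiplier (p : ℕ) : ZMod p := (Nat.fib (apparition p + 1) : ZMod p)

theorem fib_add_mul_apparition (p : ℕ) [NeZero p] (n k : ℕ) :
    (Nat.fib (n + k * apparition p) : ZMod p) = fibMultiplier p ^ k * Nat.fib n := by
  have hd : (Nat.fib (apparition p) : ZMod p) = 0 :=
    (ZMod.natCast_eq_zero_iff _ _).2 (apparition_spec p).2
  have hstep (n : ℕ) : (Nat.fib (n + apparition p) : ZMod p) = fibMultiplier p * Nat.fib n := by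
    cases n with
    | zero => simp [hd]
    | succ n =>
      rw [show n + 1 + apparition p = n + apparition p + 1 by ring, Nat.fib_add]
      push_cast
      rw [hd, fibMultiplier]
      ring
  induction k with
  | zero => simp
  | succ k ih =>
    rw [show n + (k + 1) * apparition p = n + k * apparition p + apparition p by ring, hstep, ih]
    ring

theorem fibMultiplier_sq (p : ℕ) [NeZero p] : fibMultiplier p ^ 2 = (-1) ^ apparition p := by
  have hd : (Nat.fib (apparition p) : ZMod p) = 0 :=
    (ZMod.natCast_eq_zero_iff _ _).2 (apparition_spec p).2
  rw [← fib_cassini (ZMod p) (apparition p), hd, fibMultiplier]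
  ring

theorem orderOf_fibMultiplier (p : ℕ) [NeZero p] (hp : 2 < p) :
    orderOf (fibMultiplier p) ∈ ({1, 2, 4} : Set ℕ) ∧
      (orderOf (fibMultiplier p) = 4 ↔ Odd (apparition p)) := by
  have hsq := fibMultiplier_sq p
  rcases Nat.even_or_odd (apparition p) with h | h
  · rw [h.neg_one_pow] at hsq
    have h2 : orderOf (fibMultiplier p) ∣ 2 := orderOf_dvd_of_pow_eq_one hsq
    have hno : ¬ Odd (apparition p) := Nat.not_odd_iff_even.2 h
    rcases (Nat.dvd_prime Nat.prime_two).1 h2 with h3 | h3 <;> simp [h3, hno]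
  · rw [h.neg_one_pow] at hsq
    have : Fact (2 < p) := ⟨hp⟩
    have h4 : orderOf (fibMultiplier p) = 2 ^ (1 + 1) := by
      apply orderOf_eq_prime_pow
      · rw [pow_one, hsq]
        exact ZMod.neg_one_ne_one
      · rw [show 2 ^ (1 + 1) = 2 * 2 by norm_num, pow_mul, hsq]
        ring
    simp [h4, h]

theorem pisanoAB_eq (p : ℕ) [NeZero p] (hpos : 0 < orderOf (fibMultiplier p)) :
    pisanoAB 0 1 p = apparition p * orderOf (fibMultiplier p) := by
  have hz := (apparition_spec p).1
  have hiff (m n : ℕ) : fibAB 0 1 m ≡ fibAB 0 1 n [ZMOD (p : ℤ)] ↔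
      (Nat.fib m : ZMod p) = Nat.fib n := by
    rw [← ZMod.intCast_eq_intCast_iff, fibAB_zero_one, fibAB_zero_one]
    simp
  apply IsLeast.csInf_eq
  constructor
  · refine ⟨Nat.mul_pos hz hpos, fun n => ?_⟩
    rw [hiff, mul_comm, fib_add_mul_apparition, pow_orderOf_eq_one, one_mul]
  · rintro k ⟨hk, h⟩
    have h0 := (hiff _ _).1 (h 0)
    have h1 := (hiff _ _).1 (h 1)
    rw [zero_add, Nat.fib_zero, Nat.cast_zero, ZMod.natCast_eq_zero_iff, dvd_fib_iff] at h0
    obtain ⟨m, rfl⟩ := h0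
    rw [mul_comm _ m, fib_add_mul_apparition] at h1
    have hu : fibMultiplier p ^ m = 1 := by simpa using h1
    have hm : 0 < m := Nat.pos_of_mul_pos_left hk
    exact Nat.mul_le_mul_left _ (orderOf_le_of_pow_eq_one hm hu)

theorem card_filter_dvd_range_mul (z m : ℕ) (hz : 0 < z) :
    ((Finset.range (z * m)).filter (z ∣ ·)).card = m := by
  have : (Finset.range (z * m)).filter (z ∣ ·) = (Finset.range m).image (z * ·) := by
    ext x
    simp only [Finset.mem_filter, Finset.mem_range, Finset.mem_image]
    constructor
    · rintro ⟨hx, y, rfl⟩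
      exact ⟨y, lt_of_mul_lt_mul_left hx (Nat.zero_le z), rfl⟩
    · rintro ⟨y, hy, rfl⟩
      exact ⟨Nat.mul_lt_mul_of_pos_left hy hz, dvd_mul_right _ _⟩
  rw [this, Finset.card_image_of_injective _ (mul_right_injective₀ hz.ne'), Finset.card_range]

/-- For an odd prime `p` with order of apparition `z(p)`:
`|Λ₀^p(0,1)| = π_p(0,1)/z(p)`, `|Λ₀^p(0,1)| ∈ {1,2,4}`, and `|Λ₀^p(0,1)| = 4` iff
`z(p)` is odd. -/
theorem card_LambdaSet_zero (p : ℕ) (hp : p.Prime) (hodd : Odd p) :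
    (LambdaSet 0 1 p 0).card = pisanoAB 0 1 p / apparition p ∧
    (LambdaSet 0 1 p 0).card ∈ ({1, 2, 4} : Set ℕ) ∧
    ((LambdaSet 0 1 p 0).card = 4 ↔ Odd (apparition p)) := by
  have : Fact p.Prime := ⟨hp⟩
  have hp2 : 2 < p := by
    rcases hodd with ⟨k, rfl⟩
    have := hp.two_le
    omega
  obtain ⟨hmem, h4⟩ := orderOf_fibMultiplier p hp2
  have hpos : 0 < orderOf (fibMultiplier p) := by
    rcases hmem with h | h | h <;> rw [h] <;> norm_num
  have hpi := pisanoAB_eq p hpos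
  have hz := (apparition_spec p).1
  have hjac (n : ℕ) : jacobiSym (fibAB 0 1 n) p = 0 ↔ apparition p ∣ n := by
    rw [← jacobiSym.legendreSym.to_jacobiSym, legendreSym.eq_zero_iff, fibAB_zero_one,
      Int.cast_natCast, ZMod.natCast_eq_zero_iff, dvd_fib_iff]
  have hcard : (LambdaSet 0 1 p 0).card = orderOf (fibMultiplier p) := by
    unfold LambdaSet
    simp only [hjac]
    rw [hpi, card_filter_dvd_range_mul _ _ hz]
  rw [hcard, hpi, Nat.mul_div_cancel_left _ hz]
  exact ⟨rfl, hmem, h4⟩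
end
end
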